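/- Let n ≥ 1 and r ≥ 1 be integers and let x, y ∈ [0,∞)^n. If F_{k,r}(x) ≤ F_{k,r}(y) for every integer k with r ≤ k ≤ n·r, then for every real p with 0 < p ≤ 1 one has ∑_{i=1}^n x_i^p ≤ ∑_{i=1}^n y_i^p. -/

import Mathlib

open Finset MeasureTheory

/-- `F n r k x`: the sum over all n-tuples κ of nonnegative integers with `∑ i, κ i = k`
and `max_i κ i ≤ r` of `∏ i, x i ^ κ i / (κ i)!`. -/
noncomputable def F (n r k : ℕ) (x : Fin n → ℝ) : ℝ :=
  ∑ κ ∈ Finset.univ.filter (fun κ : Fin n → Fin (r + 1) => ∑ i, (κ i : ℕ) = k),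
    ∏ i, x i ^ (κ i : ℕ) / (Nat.factorial (κ i : ℕ))

/-!
Writing `P r` for the truncated exponential, `∑ k, F n r k x * t ^ k = ∏ i, P r (x i * t)`.
For `k ≤ r` the bound on the exponents is vacuous, so `F n r k x = (∑ i, x i) ^ k / k!` by the
multinomial theorem. The hypothesis at `k = r` therefore gives `∑ i, x i ≤ ∑ i, y i`, which settles
`p = 1` and extends the hypothesis to all `k`; hence
`∑ i, log (P r (x i * t)) ≤ ∑ i, log (P r (y i * t))` for all `t ≥ 0`. For `0 < p < 1`, integrating
against `t ^ (-p - 1)` yields the claim because, by rescaling,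
`∫ t in Ioi 0, t ^ (-p - 1) * log (P r (a * t))` is `a ^ p` times a finite positive constant.
-/

section PowerIntegrals

open Set Filter Asymptotics Topology

variable {f : ℝ → ℝ} {p : ℝ}

lemma eqOn_rpow_mul_comp_mul_left {a : ℝ} (ha : 0 < a) :
    EqOn (fun t => t ^ (-p - 1) * f (a * t))
      (fun t => a ^ (p + 1) * ((a * t) ^ (-p - 1) * f (a * t))) (Ioi 0) := by
  intro t (ht : 0 < t)
  have cancel : a ^ (p + 1) * a ^ (-p - 1) = 1 := by
    rw [← Real.rpow_add ha, show p + 1 + (-p - 1) = 0 by ring, Real.rpow_zero]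
  beta_reduce
  rw [Real.mul_rpow ha.le ht.le, ← mul_assoc, ← mul_assoc, cancel, one_mul]

lemma integrableOn_rpow_mul_comp_mul_left {a : ℝ} (ha : 0 ≤ a) (hf0 : f 0 = 0)
    (hf : IntegrableOn (fun t => t ^ (-p - 1) * f t) (Ioi 0)) :
    IntegrableOn (fun t => t ^ (-p - 1) * f (a * t)) (Ioi 0) := by
  rcases ha.eq_or_lt with rfl | ha
  · simp [hf0]
  · have hscaled : IntegrableOn (fun t => (a * t) ^ (-p - 1) * f (a * t)) (Ioi 0) := by
      rw [integrableOn_Ioi_comp_mul_left_iff (fun t => t ^ (-p - 1) * f t) 0 ha, mul_zero]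
      exact hf
    rw [integrableOn_congr_fun (eqOn_rpow_mul_comp_mul_left ha) measurableSet_Ioi]
    exact hscaled.const_mul _

lemma integral_rpow_mul_comp_mul_left {a : ℝ} (ha : 0 ≤ a) (hp : p ≠ 0) (hf0 : f 0 = 0) :
    ∫ t in Ioi 0, t ^ (-p - 1) * f (a * t) = a ^ p * ∫ t in Ioi 0, t ^ (-p - 1) * f t := by
  rcases ha.eq_or_lt with rfl | ha
  · simp [hf0, Real.zero_rpow hp]
  · rw [setIntegral_congr_fun measurableSet_Ioi (eqOn_rpow_mul_comp_mul_left ha),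
      integral_const_mul, integral_comp_mul_left_Ioi (fun t => t ^ (-p - 1) * f t) 0 ha, mul_zero,
      smul_eq_mul, ← mul_assoc, Real.rpow_add_one ha.ne', mul_inv_cancel_right₀ ha.ne']

theorem sum_rpow_le_sum_rpow_of_sum_comp_mul_le {ι : Type*} [Fintype ι] {x y : ι → ℝ}
    (hx : ∀ i, 0 ≤ x i) (hy : ∀ i, 0 ≤ y i) (hp : p ≠ 0) (hf0 : f 0 = 0)
    (hpos : 0 < ∫ t in Ioi 0, t ^ (-p - 1) * f t)
    (h : ∀ t, 0 < t → ∑ i, f (x i * t) ≤ ∑ i, f (y i * t)) :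
    ∑ i, x i ^ p ≤ ∑ i, y i ^ p := by
  have hint : ∀ {z : ι → ℝ}, (∀ i, 0 ≤ z i) → ∀ i,
      IntegrableOn (fun t => t ^ (-p - 1) * f (z i * t)) (Ioi 0) := fun hz i =>
    integrableOn_rpow_mul_comp_mul_left (hz i) hf0 (.of_integral_ne_zero hpos.ne')
  have hsum : ∀ {z : ι → ℝ}, (∀ i, 0 ≤ z i) →
      (∑ i, z i ^ p) * ∫ t in Ioi 0, t ^ (-p - 1) * f t =
        ∫ t in Ioi 0, ∑ i, t ^ (-p - 1) * f (z i * t) := fun hz => by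
    rw [integral_finsetSum _ fun i _ => hint hz i, Finset.sum_mul]
    exact Finset.sum_congr rfl fun i _ => (integral_rpow_mul_comp_mul_left (hz i) hp hf0).symm
  refine le_of_mul_le_mul_right ?_ hpos
  rw [hsum hx, hsum hy]
  refine setIntegral_mono_on (integrable_finsetSum _ fun i _ => hint hx i)
    (integrable_finsetSum _ fun i _ => hint hy i) measurableSet_Ioi fun t (ht : 0 < t) => ?_
  rw [← Finset.mul_sum, ← Finset.mul_sum]
  exact mul_le_mul_of_nonneg_left (h t ht) (Real.rpow_nonneg ht.le _)

lemma isBigO_log_one_add_rpow_atTop {q : ℝ} (hq : 0 < q) :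
    (fun t : ℝ => Real.log (1 + t)) =O[atTop] fun t => t ^ q := by
  refine IsBigO.trans (.of_bound 2 ?_) (isLittleO_log_rpow_atTop hq).isBigO
  filter_upwards [eventually_ge_atTop 2] with t ht
  rw [Real.norm_of_nonneg (Real.log_nonneg (by linarith)),
    Real.norm_of_nonneg (Real.log_nonneg (by linarith))]
  calc Real.log (1 + t) ≤ Real.log (t ^ 2) := Real.log_le_log (by linarith) (by nlinarith)
    _ = 2 * Real.log t := by rw [Real.log_pow, Nat.cast_ofNat]

lemma isBigO_log_one_add_self_nhdsGT_zero :
    (fun t : ℝ => Real.log (1 + t)) =O[𝓝[>] 0] fun t => t := by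
  refine .of_bound 1 ?_
  filter_upwards [self_mem_nhdsWithin] with t (ht : 0 < t)
  rw [Real.norm_of_nonneg (Real.log_nonneg (by linarith)), Real.norm_of_nonneg ht.le, one_mul]
  linarith [Real.log_le_sub_one_of_pos (show 0 < 1 + t by linarith)]

lemma integrableOn_rpow_mul_log_one_add (hp0 : 0 < p) (hp1 : p < 1) :
    IntegrableOn (fun t => t ^ (-p - 1) * Real.log (1 + t)) (Ioi 0) := by
  have hcont : ContinuousOn (fun t : ℝ => Real.log (1 + t)) (Ioi 0) :=
    ContinuousOn.log (by fun_prop) fun t (ht : 0 < t) => by positivity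
  refine mellin_convergent_of_isBigO_scalar (a := -(p / 2)) (b := -1)
    (hcont.locallyIntegrableOn measurableSet_Ioi) ?_ (by linarith) ?_ (by linarith)
  · simpa only [neg_neg] using isBigO_log_one_add_rpow_atTop (half_pos hp0)
  · simpa only [neg_neg, Real.rpow_one] using isBigO_log_one_add_self_nhdsGT_zero

end PowerIntegrals

section truncExp

open scoped Nat

/-- The truncated exponential `1 + s + ⋯ + s ^ r / r!`, the factor contributed by each variable to
the generating function `∏ i, truncExp r (x i * t)` of `F n r k x`. -/
noncomputable def truncExp (r : ℕ) (s : ℝ) : ℝ := ∑ j ∈ range (r + 1), s ^ j / j !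

variable {r : ℕ} {s : ℝ}

lemma continuous_truncExp (r : ℕ) : Continuous (truncExp r) := by
  unfold truncExp
  fun_prop

lemma truncExp_zero_right (r : ℕ) : truncExp r 0 = 1 := by
  simp [truncExp, Finset.sum_range_succ']

lemma one_le_truncExp (r : ℕ) (hs : 0 ≤ s) : 1 ≤ truncExp r s := by
  rw [truncExp, Finset.sum_range_succ', pow_zero, Nat.factorial_zero, Nat.cast_one, div_one]
  exact le_add_of_nonneg_left (Finset.sum_nonneg fun _ _ => by positivity)

lemma one_lt_truncExp (hr : r ≠ 0) (hs : 0 < s) : 1 < truncExp r s := by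
  rw [truncExp, Finset.sum_range_succ', pow_zero, Nat.factorial_zero, Nat.cast_one, div_one]
  exact lt_add_of_pos_left _
    (Finset.sum_pos (fun _ _ => by positivity) (Finset.nonempty_range_iff.2 hr))

lemma truncExp_le_one_add_pow (r : ℕ) (hs : 0 ≤ s) : truncExp r s ≤ (1 + s) ^ r := by
  rw [truncExp, add_comm 1 s, add_pow]
  refine Finset.sum_le_sum fun j hj => ?_
  have hfact : (1 : ℝ) ≤ j ! := mod_cast j.factorial_pos
  have hchoose : (1 : ℝ) ≤ r.choose j :=
    mod_cast Nat.choose_pos (Nat.lt_succ_iff.1 (Finset.mem_range.1 hj))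
  calc s ^ j / j ! ≤ s ^ j := div_le_self (by positivity) hfact
    _ ≤ s ^ j * 1 ^ (r - j) * r.choose j := by
      rw [one_pow, mul_one]
      exact le_mul_of_one_le_right (by positivity) hchoose

lemma log_truncExp_le (r : ℕ) (hs : 0 ≤ s) :
    Real.log (truncExp r s) ≤ r * Real.log (1 + s) := by
  rw [← Real.log_pow]
  exact Real.log_le_log (zero_lt_one.trans_le (one_le_truncExp r hs))
    (truncExp_le_one_add_pow r hs)

lemma integrableOn_rpow_mul_log_truncExp (r : ℕ) {p : ℝ} (hp0 : 0 < p) (hp1 : p < 1) :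
    IntegrableOn (fun t => t ^ (-p - 1) * Real.log (truncExp r t)) (Set.Ioi 0) := by
  have hmeas : Measurable fun t : ℝ => t ^ (-p - 1) * Real.log (truncExp r t) :=
    Measurable.mul (by fun_prop) (continuous_truncExp r).measurable.log
  refine ((integrableOn_rpow_mul_log_one_add hp0 hp1).const_mul (r : ℝ)).mono'
    hmeas.aestronglyMeasurable <|
      ae_restrict_of_forall_mem measurableSet_Ioi fun t (ht : 0 < t) => ?_
  have hlog : 0 ≤ Real.log (truncExp r t) := Real.log_nonneg (one_le_truncExp r ht.le)
  rw [Real.norm_of_nonneg (by positivity), mul_left_comm]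
  exact mul_le_mul_of_nonneg_left (log_truncExp_le r ht.le) (by positivity)

lemma integral_rpow_mul_log_truncExp_pos (hr : r ≠ 0) {p : ℝ} (hp0 : 0 < p) (hp1 : p < 1) :
    0 < ∫ t in Set.Ioi 0, t ^ (-p - 1) * Real.log (truncExp r t) := by
  have hpos : ∀ t ∈ Set.Ioi (0 : ℝ), 0 < t ^ (-p - 1) * Real.log (truncExp r t) :=
    fun t ht => mul_pos (Real.rpow_pos_of_pos ht _) (Real.log_pos (one_lt_truncExp hr ht))
  have hsupp : Set.Ioi 0 ⊆ Function.support fun t => t ^ (-p - 1) * Real.log (truncExp r t) :=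
    fun t ht => (hpos t ht).ne'
  rw [setIntegral_pos_iff_support_of_nonneg_ae
    (ae_restrict_of_forall_mem measurableSet_Ioi fun t ht => (hpos t ht).le)
    (integrableOn_rpow_mul_log_truncExp r hp0 hp1),
    Set.inter_eq_right.2 hsupp, Real.volume_Ioi]
  exact ENNReal.zero_lt_top

end truncExp

section F

open scoped Nat

lemma prod_pow_div_factorial {ι K : Type*} [Field K] [CharZero K] (s : Finset ι) (x : ι → K)
    (κ : ι → ℕ) :
    ∏ i ∈ s, x i ^ κ i / (κ i)! =
      Nat.multinomial s κ * (∏ i ∈ s, x i ^ κ i) / (∑ i ∈ s, κ i)! := by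
  have hmult : (Nat.multinomial s κ : K) ≠ 0 := Nat.cast_ne_zero.2 (Nat.multinomial_pos s κ).ne'
  rw [Finset.prod_div_distrib, ← Nat.multinomial_spec s κ, Nat.cast_mul, Nat.cast_prod,
    mul_comm (∏ i ∈ s, ((κ i)! : K)), mul_div_mul_left _ _ hmult]

variable {n r k : ℕ} {x y : Fin n → ℝ}

lemma F_eq_sum_pow_div_factorial (hk : k ≤ r) (x : Fin n → ℝ) :
    F n r k x = (∑ i, x i) ^ k / k ! := by
  rw [Finset.sum_pow_eq_sum_piAntidiag, Finset.sum_div, F]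
  refine Finset.sum_bij (fun κ _ i => (κ i : ℕ)) ?_ ?_ ?_ ?_
  · intro κ hκ
    simpa using hκ
  · intro κ _ κ' _ h
    exact funext fun i => Fin.ext (congrFun h i)
  · intro κ hκ
    have hsum : ∑ i, κ i = k := (Finset.mem_piAntidiag.1 hκ).1
    have hlt (i : Fin n) : κ i < r + 1 := Nat.lt_succ_iff.2 <|
      (Finset.single_le_sum (fun _ _ => Nat.zero_le _) (Finset.mem_univ i)).trans (hsum.trans_le hk)
    exact ⟨fun i => ⟨κ i, hlt i⟩, by simpa using hsum, rfl⟩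
  · intro κ hκ
    rw [prod_pow_div_factorial, (Finset.mem_filter.1 hκ).2]

lemma sum_le_sum_of_F_le_F (hk0 : k ≠ 0) (hkr : k ≤ r) (hy : ∀ i, 0 ≤ y i)
    (h : F n r k x ≤ F n r k y) : ∑ i, x i ≤ ∑ i, y i := by
  rw [F_eq_sum_pow_div_factorial hkr, F_eq_sum_pow_div_factorial hkr,
    div_le_div_iff_of_pos_right (by positivity)] at h
  exact le_of_pow_le_pow_left₀ hk0 (Finset.sum_nonneg fun i _ => hy i) h

lemma F_le_F_of_sum_le_sum (hk : k ≤ r) (hx : ∀ i, 0 ≤ x i) (h : ∑ i, x i ≤ ∑ i, y i) :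
    F n r k x ≤ F n r k y := by
  have hsum : 0 ≤ ∑ i, x i := Finset.sum_nonneg fun i _ => hx i
  rw [F_eq_sum_pow_div_factorial hk, F_eq_sum_pow_div_factorial hk]
  gcongr

lemma prod_truncExp_mul (r : ℕ) (x : Fin n → ℝ) (t : ℝ) :
    ∏ i, truncExp r (x i * t) = ∑ k ∈ range (n * r + 1), F n r k x * t ^ k := by
  have hmaps (κ : Fin n → Fin (r + 1)) : ∑ i, (κ i : ℕ) ∈ range (n * r + 1) := by
    rw [Finset.mem_range, Nat.lt_succ_iff]
    simpa using Finset.sum_le_sum fun i (_ : i ∈ Finset.univ) => (κ i).is_le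
  simp only [truncExp, ← Fin.sum_univ_eq_sum_range (fun j => (_ : ℝ) ^ j / (j ! : ℝ))]
  rw [Fintype.prod_sum, ← Finset.sum_fiberwise_of_maps_to fun κ _ => hmaps κ]
  refine Finset.sum_congr rfl fun k _ => ?_
  rw [F, Finset.sum_mul]
  refine Finset.sum_congr rfl fun κ hκ => ?_
  rw [← (Finset.mem_filter.1 hκ).2, ← Finset.prod_pow_eq_pow_sum, ← Finset.prod_mul_distrib]
  exact Finset.prod_congr rfl fun i _ => by rw [mul_pow, mul_div_right_comm]

lemma sum_log_truncExp_mul_le (hx : ∀ i, 0 ≤ x i) (hy : ∀ i, 0 ≤ y i)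
    (hF : ∀ k ≤ n * r, F n r k x ≤ F n r k y) {t : ℝ} (ht : 0 ≤ t) :
    ∑ i, Real.log (truncExp r (x i * t)) ≤ ∑ i, Real.log (truncExp r (y i * t)) := by
  have hpos {a : ℝ} (ha : 0 ≤ a) : 0 < truncExp r (a * t) :=
    zero_lt_one.trans_le (one_le_truncExp r (mul_nonneg ha ht))
  rw [← Real.log_prod fun i _ => (hpos (hx i)).ne', ← Real.log_prod fun i _ => (hpos (hy i)).ne']
  refine Real.log_le_log (Finset.prod_pos fun i _ => hpos (hx i)) ?_
  rw [prod_truncExp_mul, prod_truncExp_mul]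
  refine Finset.sum_le_sum fun k hk => mul_le_mul_of_nonneg_right (hF k ?_) (pow_nonneg ht k)
  exact Nat.lt_succ_iff.1 (Finset.mem_range.1 hk)

end F

theorem stmt0 (n r : ℕ) (hn : 1 ≤ n) (hr : 1 ≤ r) (x y : Fin n → ℝ)
    (hx : ∀ i, 0 ≤ x i) (hy : ∀ i, 0 ≤ y i)
    (hF : ∀ k : ℕ, r ≤ k → k ≤ n * r → F n r k x ≤ F n r k y) :
    ∀ p : ℝ, 0 < p → p ≤ 1 → ∑ i, x i ^ p ≤ ∑ i, y i ^ p := by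
  intro p hp0 hp1
  have hr0 : r ≠ 0 := Nat.one_le_iff_ne_zero.1 hr
  have hsum : ∑ i, x i ≤ ∑ i, y i :=
    sum_le_sum_of_F_le_F hr0 le_rfl hy (hF r le_rfl (Nat.le_mul_of_pos_left r hn))
  rcases hp1.eq_or_lt with rfl | hp1
  · simpa only [Real.rpow_one] using hsum
  have hF_all : ∀ k ≤ n * r, F n r k x ≤ F n r k y := fun k hk =>
    (le_total r k).elim (fun hrk => hF k hrk hk) fun hkr => F_le_F_of_sum_le_sum hkr hx hsum
  exact sum_rpow_le_sum_rpow_of_sum_comp_mul_le (f := fun s => Real.log (truncExp r s)) hx hy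
    hp0.ne' (by rw [truncExp_zero_right, Real.log_one])
    (integral_rpow_mul_log_truncExp_pos hr0 hp0 hp1)
    fun t ht => sum_log_truncExp_mul_le hx hy hF_all ht.le
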